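/- Let N ∈ ℕ, P > 0, and let the parameters θ_j = (ω_j, α_j, β_j, φ_j, λ_j), j = 1, …, N, satisfy ω_j = (2π/P)·k_j for integers k_j. Set K = Σ_{j=1}^N |k_j|. Then there exist complex coefficients B_n for −K ≤ n ≤ K such that for all x ∈ ℝ, ⟨1| U^F(x; θ_N) · ⋯ · U^F(x; θ_1) |0⟩ = Σ_{n=−K}^{K} B_n · exp(2πinx/P); that is, the circuit output is a truncated Fourier series on an interval of length P. -/

import Mathlib

/-!
The entries of each gate are trigonometric polynomials in `x`: since `ω = 2πk/P`, the matrix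
`R_z(2ωx)` is diagonal with entries `exp(±2πikx/P)`, and the factors around it do not depend on `x`,
so every entry of the gate has degree at most `|k|` (`UF_mem`). Degrees add under multiplication
(`mul_mem_trigPoly`), hence every entry of the product has degree at most `∑ j, |k j|`
(`prodRev_mem`). The coefficients are read off from membership in the span of the modes.
-/

open scoped Matrix

/-- Single-qubit rotation about the y-axis. -/
noncomputable def Ry (θ : ℝ) : Matrix (Fin 2) (Fin 2) ℂ :=
  !![(Real.cos (θ / 2) : ℂ), -(Real.sin (θ / 2) : ℂ);
     (Real.sin (θ / 2) : ℂ), (Real.cos (θ / 2) : ℂ)]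

/-- Single-qubit rotation about the z-axis. -/
noncomputable def Rz (θ : ℝ) : Matrix (Fin 2) (Fin 2) ℂ :=
  !![Complex.exp (Complex.I * (θ / 2)), 0;
     0, Complex.exp (-(Complex.I * (θ / 2)))]

/-- The fundamental Fourier gate
`U^F(x; ω, α, β, φ, λ) = R_z(α+β) · R_y(2λ) · R_z(α−β) · R_z(2ωx) · R_y(2φ)`. -/
noncomputable def UF (x ω α β φ l : ℝ) : Matrix (Fin 2) (Fin 2) ℂ :=
  Rz (α + β) * Ry (2 * l) * Rz (α - β) * Rz (2 * ω * x) * Ry (2 * φ)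

/-- The ordered product `f (n-1) * ⋯ * f 1 * f 0`. -/
noncomputable def prodRev {n : ℕ} (f : Fin n → Matrix (Fin 2) (Fin 2) ℂ) :
    Matrix (Fin 2) (Fin 2) ℂ :=
  (List.ofFn fun j => f j.rev).prod

/-- The Fourier mode `x ↦ exp(2πinx/P)`. -/
noncomputable def fourierMode (P : ℝ) (n : ℤ) (x : ℝ) : ℂ :=
  Complex.exp (2 * Real.pi * Complex.I * n * x / P)

/-- The trigonometric polynomials of degree at most `K` and period `P`: the span of the modes `n`
with `-K ≤ n ≤ K`, inside the algebra of functions `ℝ → ℂ`. -/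
noncomputable def trigPoly (P : ℝ) (K : ℤ) : Submodule ℂ (ℝ → ℂ) :=
  Submodule.span ℂ (fourierMode P '' (Finset.Icc (-K) K : Finset ℤ))

lemma fourierMode_mem_trigPoly (P : ℝ) {n K : ℤ} (h : |n| ≤ K) :
    fourierMode P n ∈ trigPoly P K :=
  Submodule.subset_span ⟨n, by simpa using abs_le.mp h, rfl⟩

lemma fourierMode_mul (P : ℝ) (m n : ℤ) :
    fourierMode P m * fourierMode P n = fourierMode P (m + n) := by
  funext x
  simp only [fourierMode, Pi.mul_apply, ← Complex.exp_add]
  congr 1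
  push_cast
  ring

lemma const_mem_trigPoly (P : ℝ) (c : ℂ) : (fun _ : ℝ => c) ∈ trigPoly P 0 := by
  have h := (trigPoly P 0).smul_mem c (fourierMode_mem_trigPoly P (n := 0) (K := 0) (by simp))
  convert h using 1
  funext x
  simp [fourierMode]

lemma mul_mem_trigPoly {P : ℝ} {a b : ℤ} {f g : ℝ → ℂ}
    (hf : f ∈ trigPoly P a) (hg : g ∈ trigPoly P b) : f * g ∈ trigPoly P (a + b) := by
  have h := Submodule.mul_mem_mul hf hg
  rw [trigPoly, trigPoly, Submodule.span_mul_span] at h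
  refine Submodule.span_le.mpr ?_ h
  rintro _ ⟨_, ⟨m, hm, rfl⟩, _, ⟨n, hn, rfl⟩, rfl⟩
  simp only [Finset.coe_Icc, Set.mem_Icc] at hm hn
  simp only [fourierMode_mul]
  exact fourierMode_mem_trigPoly P (abs_le.mpr ⟨by linarith, by linarith⟩)

/-- Multiplying matrices whose entries are trigonometric polynomials adds the degree bounds. -/
lemma matrix_mul_mem {P : ℝ} {a b : ℤ} {A B : ℝ → Matrix (Fin 2) (Fin 2) ℂ}
    (hA : ∀ i j, (fun x => A x i j) ∈ trigPoly P a)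
    (hB : ∀ i j, (fun x => B x i j) ∈ trigPoly P b) (i j : Fin 2) :
    (fun x => (A x * B x) i j) ∈ trigPoly P (a + b) := by
  simp only [Matrix.mul_apply, Fin.sum_univ_two]
  exact add_mem (mul_mem_trigPoly (hA i 0) (hB 0 j)) (mul_mem_trigPoly (hA i 1) (hB 1 j))

lemma Rz_mem {P ω : ℝ} {k : ℤ} (hω : ω = (2 * Real.pi / P) * k) (i j : Fin 2) :
    (fun x : ℝ => Rz (2 * ω * x) i j) ∈ trigPoly P |k| := by
  have hpos : (fun x : ℝ => Rz (2 * ω * x) 0 0) = fourierMode P k := by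
    funext x
    change Complex.exp (Complex.I * ((2 * ω * x : ℝ) / 2)) = fourierMode P k x
    rw [fourierMode, hω]
    congr 1
    push_cast
    ring
  have hneg : (fun x : ℝ => Rz (2 * ω * x) 1 1) = fourierMode P (-k) := by
    funext x
    change Complex.exp (-(Complex.I * ((2 * ω * x : ℝ) / 2))) = fourierMode P (-k) x
    rw [fourierMode, hω]
    congr 1
    push_cast
    ring
  fin_cases i <;> fin_cases j
  · exact hpos ▸ fourierMode_mem_trigPoly P le_rfl
  · exact zero_mem (trigPoly P |k|)
  · exact zero_mem (trigPoly P |k|)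
  · exact hneg ▸ fourierMode_mem_trigPoly P (abs_neg k).le

lemma UF_mem {P ω : ℝ} {k : ℤ} (hω : ω = (2 * Real.pi / P) * k) (α β φ l : ℝ) (i j : Fin 2) :
    (fun x => UF x ω α β φ l i j) ∈ trigPoly P |k| := by
  have h := matrix_mul_mem
    (matrix_mul_mem (fun i j => const_mem_trigPoly P ((Rz (α + β) * Ry (2 * l) * Rz (α - β)) i j))
      (Rz_mem hω))
    (fun i j => const_mem_trigPoly P (Ry (2 * φ) i j)) i j
  rw [zero_add, add_zero] at h
  exact h

lemma prodRev_succ {n : ℕ} (f : Fin (n + 1) → Matrix (Fin 2) (Fin 2) ℂ) :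
    prodRev f = f (Fin.last n) * prodRev fun j => f j.castSucc := by
  simp [prodRev, List.ofFn_succ, Fin.rev_succ]

lemma prodRev_mem {P : ℝ} {N : ℕ} {d : Fin N → ℤ} {f : Fin N → ℝ → Matrix (Fin 2) (Fin 2) ℂ}
    (hf : ∀ m i j, (fun x => f m x i j) ∈ trigPoly P (d m)) (i j : Fin 2) :
    (fun x => prodRev (fun m => f m x) i j) ∈ trigPoly P (∑ m, d m) := by
  induction N generalizing i j with
  | zero => simpa [prodRev] using const_mem_trigPoly P ((1 : Matrix (Fin 2) (Fin 2) ℂ) i j)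
  | succ n ih =>
    simp only [prodRev_succ, Fin.sum_univ_castSucc]
    rw [add_comm]
    exact matrix_mul_mem (hf (Fin.last n)) (ih fun m => hf m.castSucc) i j

/-- **Quantum Fourier series.** If each gate frequency is an integer multiple of `2π/P`,
the circuit output `⟨1| U^F(x;θ_N) ⋯ U^F(x;θ_1) |0⟩` is a truncated Fourier series on an
interval of length `P`, with frequencies bounded by `K = Σ_j |k_j|`. -/
theorem UF_circuit_truncated_fourier (N : ℕ) (P : ℝ) (hP : 0 < P)
    (ω α β φ l : Fin N → ℝ) (k : Fin N → ℤ)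
    (hω : ∀ j, ω j = (2 * Real.pi / P) * k j) :
    ∃ B : ℤ → ℂ,
      ∀ x : ℝ,
        (prodRev fun j => UF x (ω j) (α j) (β j) (φ j) (l j)) 1 0 =
          ∑ n ∈ Finset.Icc (-(∑ j, |k j|)) (∑ j, |k j|),
            B n * Complex.exp (2 * Real.pi * Complex.I * n * x / P) := by
  have h := prodRev_mem (fun m => UF_mem (hω m) (α m) (β m) (φ m) (l m)) 1 0
  obtain ⟨B, hB⟩ := (Submodule.mem_span_image_finset_iff_exists_fun ℂ).mp h
  -- `B` is defined on the index interval only; extend it by zero to all of `ℤ`.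
  refine ⟨fun n => if hn : n ∈ Finset.Icc (-(∑ j, |k j|)) (∑ j, |k j|) then B ⟨n, hn⟩ else 0,
    fun x => ?_⟩
  rw [← Finset.sum_coe_sort, ← congrFun hB x, Finset.sum_apply]
  refine Finset.sum_congr rfl fun n _ => ?_
  simp only [dif_pos n.2]
  rfl
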